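/- Let v ∈ V ∖ {0} in an orthogonal representation of a compact Lie group G with V^G = {0}. Then the isotropy group G_v is a proper 'smaller' compact subgroup: either dim G_v < dim G, or dim G_v = dim G and G_v has fewer connected components than G. In particular the relation G' < G defined this way is well-founded on isomorphism classes of compact Lie groups. -/

import Mathlib

/-!
The isotropy group `H = G_v` is a closed subgroup of the compact group `G`, and it is proper because
`v ≠ 0` is not fixed by all of `G`. So it suffices to compare a compact group `G` inside a
finite-dimensional real algebra with a proper closed subgroup `H`, which is `MatrixGroup.smaller`.

The main input is Cartan's closed subgroup theorem. Put `𝔤 = {X | ∀ t, exp (t X) ∈ G}`. Any limit of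
rescaled logarithms of elements of `G` tending to `1` lies in `𝔤` (`mem_lieSet_of_tendsto`), which
makes `𝔤` a linear subspace, and which together with the inverse function theorem for
`(x, y) ↦ exp x * exp y` on `𝔤 × W`, with `W` a complement of `𝔤`, shows that `exp '' 𝔤` contains a
neighbourhood of `1` in `G` (`eventually_mem_exp_image`). Since `exp` is bilipschitz near `0`, the
Hausdorff dimension of `G` is `dim 𝔤` (`dimH_eq`). Since `exp '' 𝔤` is connected, the components of
`G` are open, hence finite in number when `G` is compact (`finite_components`).

The Lie algebra `𝔥` of `H` is contained in `𝔤`. If `𝔥 ≠ 𝔤`, the dimension drops. If `𝔥 = 𝔤`, then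
`H` contains a neighbourhood of `1` in `G`, so it is open and closed in `G`: it is a union of
components of `G`, and not all of them (`card_components_lt`).
-/

namespace MatrixGroup

open Filter Topology Module

section
variable {E : Type*} [NormedRing E] [NormedAlgebra ℝ E] [FiniteDimensional ℝ E]

/-- A closed subset of a finite-dimensional real algebra `E` which is a group under the
multiplication of `E`. -/
structure IsClosedGroup (G : Set E) : Prop where
  closed : IsClosed G
  one : (1 : E) ∈ G
  mul : ∀ a ∈ G, ∀ b ∈ G, a * b ∈ G
  inv : ∀ a ∈ G, ∃ b ∈ G, a * b = 1 ∧ b * a = 1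

/-- The set underlying the Lie algebra of `G`: the directions `X` whose one-parameter group
`t ↦ exp (t X)` lies in `G`. -/
def lieSet (G : Set E) : Set E := {X | ∀ t : ℝ, NormedSpace.exp (t • X) ∈ G}

lemma exp_cont : Continuous (NormedSpace.exp : E → E) := by
  let _ : NormedAlgebra ℚ E := NormedAlgebra.restrictScalars ℚ ℝ E
  have : CompleteSpace E := FiniteDimensional.complete ℝ E
  exact NormedSpace.exp_continuous

lemma exp_neg_mul (x : E) : NormedSpace.exp (-x) * NormedSpace.exp x = 1 := by
  let _ : NormedAlgebra ℚ E := NormedAlgebra.restrictScalars ℚ ℝ E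
  have : CompleteSpace E := FiniteDimensional.complete ℝ E
  rw [← NormedSpace.exp_add_of_commute (Commute.refl x).neg_left, neg_add_cancel,
    NormedSpace.exp_zero]

lemma exp_nsmul' (n : ℕ) (x : E) : NormedSpace.exp (n • x) = NormedSpace.exp x ^ n := by
  let _ : NormedAlgebra ℚ E := NormedAlgebra.restrictScalars ℚ ℝ E
  have : CompleteSpace E := FiniteDimensional.complete ℝ E
  exact NormedSpace.exp_nsmul n x

/-- The derivative of `exp` at `0` is the identity, recorded as an equivalence so that the inverse
function theorem applies. -/
lemma exp_strict :
    HasStrictFDerivAt (NormedSpace.exp : E → E)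
      ((ContinuousLinearEquiv.refl ℝ E : E ≃L[ℝ] E) : E →L[ℝ] E) 0 := by
  have : CompleteSpace E := FiniteDimensional.complete ℝ E
  exact hasStrictFDerivAt_exp_zero (𝕂 := ℝ) (𝔸 := E)

variable {G : Set E}

lemma IsClosedGroup.pow (hG : IsClosedGroup G) {a : E} (ha : a ∈ G) (n : ℕ) : a ^ n ∈ G := by
  induction n with
  | zero => simpa using hG.one
  | succ n ih => rw [pow_succ]; exact hG.mul _ ih _ ha

lemma IsClosedGroup.exp_neg_mem (hG : IsClosedGroup G) {x : E} (hx : NormedSpace.exp x ∈ G) :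
    NormedSpace.exp (-x) ∈ G := by
  obtain ⟨b, hb, h1, -⟩ := hG.inv _ hx
  have : NormedSpace.exp (-x) = b := left_inv_eq_right_inv (exp_neg_mul x) h1
  rwa [this]

/-- A limit of rescaled logarithms of elements of `G` tending to `1` lies in the Lie algebra:
`exp (t X)` is the limit of the powers `exp (L n) ^ ⌊t * c n⌋`. -/
lemma mem_lieSet_of_tendsto (hG : IsClosedGroup G) {L : ℕ → E} {c : ℕ → ℝ} {X : E}
    (hL : ∀ᶠ n in atTop, NormedSpace.exp (L n) ∈ G) (hc : Tendsto c atTop atTop)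
    (hX : Tendsto (fun n => c n • L n) atTop (𝓝 X)) : X ∈ lieSet G := by
  have : CompleteSpace E := FiniteDimensional.complete ℝ E
  have key : ∀ t : ℝ, 0 ≤ t → NormedSpace.exp (t • X) ∈ G := by
    intro t ht
    have h1 : Tendsto (fun n => ((⌊t * c n⌋₊ : ℝ) / c n) • (c n • L n)) atTop (𝓝 (t • X)) :=
      ((tendsto_nat_floor_mul_div_atTop ht).comp hc).smul hX
    have h2 := (exp_cont.tendsto (t • X)).comp h1
    refine hG.closed.mem_of_tendsto h2 ?_
    filter_upwards [hL, hc.eventually_gt_atTop 0] with n hn hcn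
    have : ((⌊t * c n⌋₊ : ℝ) / c n) • (c n • L n) = ⌊t * c n⌋₊ • L n := by
      rw [smul_smul, div_mul_cancel₀ _ hcn.ne', Nat.cast_smul_eq_nsmul]
    simp only [Function.comp, this, exp_nsmul']
    exact hG.pow hn _
  intro t
  rcases le_total 0 t with ht | ht
  · exact key t ht
  · have := hG.exp_neg_mem (key (-t) (by linarith))
    simpa using this

/-- The logarithm of `exp (s X) * exp (s Y)` has derivative `X + Y` at `s = 0`. -/
lemma add_mem_lieSet (hG : IsClosedGroup G) {X Y : E} (hX : X ∈ lieSet G) (hY : Y ∈ lieSet G) :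
    X + Y ∈ lieSet G := by
  have : CompleteSpace E := FiniteDimensional.complete ℝ E
  have hs := exp_strict (E := E)
  set log := hs.localInverse NormedSpace.exp _ 0 with hlog
  have hlogd : HasFDerivAt log (ContinuousLinearMap.id ℝ E) 1 := by
    have := hs.to_localInverse.hasFDerivAt
    rw [NormedSpace.exp_zero] at this
    exact this
  have hexp : ∀ Z : E, HasDerivAt (fun s : ℝ => NormedSpace.exp (s • Z)) Z 0 := by
    intro Z
    have h1 : HasDerivAt (fun s : ℝ => s • Z) Z 0 := by
      simpa using (hasDerivAt_id (0 : ℝ)).smul_const Z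
    have h2 : HasFDerivAt (NormedSpace.exp : E → E) (ContinuousLinearMap.id ℝ E)
      ((0 : ℝ) • Z) := by rw [zero_smul]; exact hs.hasFDerivAt
    exact h2.comp_hasDerivAt (0 : ℝ) h1
  set p : ℝ → E := fun s => NormedSpace.exp (s • X) * NormedSpace.exp (s • Y) with hp
  have hp0 : p 0 = 1 := by simp [hp, NormedSpace.exp_zero]
  have hpd : HasDerivAt p (X + Y) 0 := by
    have := (hexp X).mul (hexp Y)
    simp only [zero_smul, NormedSpace.exp_zero, one_mul, mul_one] at this
    exact this
  have hφ : HasDerivAt (fun s => log (p s)) (X + Y) 0 := by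
    have h2 : HasFDerivAt log (ContinuousLinearMap.id ℝ E) (p 0) := by rwa [hp0]
    exact h2.comp_hasDerivAt (0 : ℝ) hpd
  have hlog1 : log 1 = 0 := by
    have := hs.localInverse_apply_image
    rwa [NormedSpace.exp_zero] at this
  have hc : Tendsto (fun n : ℕ => (n : ℝ)) atTop atTop := tendsto_natCast_atTop_atTop
  have hc' : Tendsto (fun n : ℕ => ((n : ℝ))⁻¹) atTop (𝓝 0) := tendsto_inv_atTop_zero.comp hc
  refine mem_lieSet_of_tendsto hG (L := fun n => log (p ((n : ℝ)⁻¹))) (c := fun n => (n : ℝ))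
    ?_ hc ?_
  · have h1 : ∀ᶠ y in 𝓝 (1 : E), NormedSpace.exp (log y) = y := by
      have := hs.eventually_right_inverse
      rwa [NormedSpace.exp_zero] at this
    have h2 : Tendsto (fun n : ℕ => p ((n : ℝ)⁻¹)) atTop (𝓝 1) := by
      have := hpd.continuousAt.tendsto.comp hc'
      rwa [hp0] at this
    filter_upwards [h2.eventually h1] with n hn
    rw [hn]
    exact hG.mul _ (hX _) _ (hY _)
  · have := hφ.hasFDerivAt.lim (1 : ℝ) (c := fun n : ℕ => (n : ℝ)) (l := atTop)
      (by simpa using hc)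
    simpa [hp0, hlog1] using this

/-- The Lie algebra of a closed group, as a linear subspace. -/
def lieAlg (hG : IsClosedGroup G) : Submodule ℝ E where
  carrier := lieSet G
  add_mem' := add_mem_lieSet hG
  zero_mem' := fun t => by simpa [NormedSpace.exp_zero] using hG.one
  smul_mem' := fun c X hX t => by simpa [smul_smul] using hX (t * c)

lemma exp_mem (hG : IsClosedGroup G) {X : E} (hX : X ∈ lieAlg hG) : NormedSpace.exp X ∈ G := by
  simpa using hX 1

/-- Transversally to the Lie algebra, only `0` is sent into `G` near `0`. -/
lemma eventually_eq_zero (hG : IsClosedGroup G) {W : Submodule ℝ E}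
    (hW : Disjoint (lieAlg hG) W) :
    ∀ᶠ y : W in 𝓝 0, NormedSpace.exp (y : E) ∈ G → y = 0 := by
  by_contra hcon
  have hf : ∃ᶠ y : W in 𝓝 0, NormedSpace.exp (y : E) ∈ G ∧ y ≠ 0 := by
    simpa only [Filter.Frequently, not_and, not_not] using hcon
  obtain ⟨y, hy0, hy⟩ := exists_seq_forall_of_frequently hf
  -- a limit `z` of the normalised vectors is a unit vector of `W` which lies in the Lie algebra
  obtain ⟨z, hz, φ, hφ, hlim⟩ := (isCompact_sphere (0 : W) 1).tendsto_subseq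
    (x := fun n => ‖y n‖⁻¹ • y n) (by
      intro n
      simp [norm_smul, (hy n).2])
  have hz' : (z : E) ∈ lieSet G := by
    refine mem_lieSet_of_tendsto hG (L := fun n => (y (φ n) : E)) (c := fun n => ‖y (φ n)‖⁻¹)
      (Eventually.of_forall fun n => (hy _).1) ?_ ?_
    · refine tendsto_inv_nhdsGT_zero.comp (tendsto_nhdsWithin_iff.2 ⟨?_, ?_⟩)
      · simpa using (hy0.comp hφ.tendsto_atTop).norm
      · exact Eventually.of_forall fun n => by simp [(hy (φ n)).2]
    · exact (continuous_subtype_val.tendsto z).comp hlim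
  have : (z : E) = 0 := Submodule.disjoint_def.1 hW _ hz' z.2
  have hz0 : z = 0 := Subtype.ext this
  simp [hz0] at hz

/-- Cartan: elements of `G` near `1` are exponentials of elements of the Lie algebra, which can be
taken in any prescribed neighbourhood `U` of `0`. -/
lemma eventually_mem_exp_image (hG : IsClosedGroup G) {U : Set E} (hU : U ∈ 𝓝 (0 : E)) :
    ∀ᶠ g in 𝓝 (1 : E), g ∈ G → ∃ x ∈ lieAlg hG, x ∈ U ∧ NormedSpace.exp x = g := by
  have : CompleteSpace E := FiniteDimensional.complete ℝ E
  obtain ⟨W, hW⟩ := (lieAlg hG).exists_isCompl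
  set e : (lieAlg hG × W) ≃L[ℝ] E :=
    (Submodule.prodEquivOfIsCompl _ _ hW).toContinuousLinearEquiv with he
  set Φ : lieAlg hG × W → E := fun q => NormedSpace.exp (q.1 : E) * NormedSpace.exp (q.2 : E)
    with hΦ
  have hs := exp_strict (E := E)
  have hΦ0 : Φ 0 = 1 := by simp [hΦ, NormedSpace.exp_zero]
  have hd : HasStrictFDerivAt Φ (e : (lieAlg hG × W) →L[ℝ] E) 0 := by
    have h1 : HasStrictFDerivAt (fun q : lieAlg hG × W => NormedSpace.exp (q.1 : E))
        ((lieAlg hG).subtypeL.comp (ContinuousLinearMap.fst ℝ _ _)) 0 := by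
      have := ((lieAlg hG).subtypeL.comp
        (ContinuousLinearMap.fst ℝ (lieAlg hG) W)).hasStrictFDerivAt (x := 0)
      exact HasStrictFDerivAt.comp (g := NormedSpace.exp) 0 (by simpa using hs) this
    have h2 : HasStrictFDerivAt (fun q : lieAlg hG × W => NormedSpace.exp (q.2 : E))
        (W.subtypeL.comp (ContinuousLinearMap.snd ℝ _ _)) 0 := by
      have := (W.subtypeL.comp
        (ContinuousLinearMap.snd ℝ (lieAlg hG) W)).hasStrictFDerivAt (x := 0)
      exact HasStrictFDerivAt.comp (g := NormedSpace.exp) 0 (by simpa using hs) this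
    refine (h1.mul' h2).congr_fderiv ?_
    ext q
    · simp [he, NormedSpace.exp_zero]
    · simp [he, NormedSpace.exp_zero]
  have hr := hd.eventually_right_inverse
  have ht := hd.localInverse_tendsto
  rw [hΦ0] at hr ht
  have hev : ∀ᶠ q in 𝓝 (0 : lieAlg hG × W), (q.1 : E) ∈ U ∧
      (NormedSpace.exp (q.2 : E) ∈ G → q.2 = 0) := by
    have c1 : Tendsto (fun q : lieAlg hG × W => (q.1 : E)) (𝓝 0) (𝓝 0) :=
      Continuous.tendsto' (by fun_prop) _ _ rfl
    have c2 : Tendsto (fun q : lieAlg hG × W => q.2) (𝓝 0) (𝓝 0) :=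
      Continuous.tendsto' (by fun_prop) _ _ rfl
    exact (c1.eventually hU).and (c2.eventually (eventually_eq_zero hG hW.disjoint))
  filter_upwards [hr, ht.eventually hev] with g hg ⟨hgU, hg0⟩ hgG
  set q := hd.localInverse Φ e 0 g
  have hy : q.2 = 0 := by
    apply hg0
    -- `exp y = exp (-x) * g` lies in `G`
    have h1 := hG.mul _ (hG.exp_neg_mem (exp_mem hG q.1.2)) _ hgG
    rw [← hg] at h1
    simpa only [hΦ, ← mul_assoc, exp_neg_mul, one_mul] using h1
  refine ⟨q.1, q.1.2, hgU, ?_⟩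
  rw [← hg]
  simp [hΦ, hy, NormedSpace.exp_zero]

/-- Neighbourhoods of `1` in `G` are carried to neighbourhoods of `x ∈ G` by left translation. -/
lemma IsClosedGroup.eventually_translate (hG : IsClosedGroup G) {S : Set E}
    (hS : ∀ᶠ g in 𝓝 (1 : E), g ∈ G → g ∈ S) {x : E} (hx : x ∈ G) :
    ∀ᶠ g in 𝓝 x, g ∈ G → g ∈ (fun y => x * y) '' S := by
  obtain ⟨b, hb, hxb, hbx⟩ := hG.inv x hx
  have h1 : Tendsto (fun g => b * g) (𝓝 x) (𝓝 1) :=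
    Continuous.tendsto' (by fun_prop) _ _ hbx
  filter_upwards [h1.eventually hS] with g hg hgG
  exact ⟨b * g, hg (hG.mul _ hb _ hgG), by simp only [← mul_assoc, hxb, one_mul]⟩

/-- The Hausdorff dimension of a closed group is the dimension of its Lie algebra. -/
lemma dimH_eq (hG : IsClosedGroup G) : dimH G = finrank ℝ (lieAlg hG) := by
  obtain ⟨s, hs, happ⟩ := (exp_strict (E := E)).approximates_deriv_on_nhds
    (c := 1 / 2) (Or.inr (by norm_num))
  have hup : ∀ x ∈ s, ∀ y ∈ s,
      ‖NormedSpace.exp x - NormedSpace.exp y‖ ≤ 2 * ‖x - y‖ ∧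
      ‖x - y‖ ≤ 2 * ‖NormedSpace.exp x - NormedSpace.exp y‖ := by
    intro x hx y hy
    have h := happ x hx y hy
    simp only [ContinuousLinearEquiv.coe_coe, ContinuousLinearEquiv.refl_apply] at h
    have h' : ‖NormedSpace.exp x - NormedSpace.exp y - (x - y)‖ ≤ 1 / 2 * ‖x - y‖ := by
      simpa using h
    have h1 := norm_sub_norm_le (NormedSpace.exp x - NormedSpace.exp y) (x - y)
    have h2 := norm_sub_norm_le (x - y) (NormedSpace.exp x - NormedSpace.exp y)
    rw [norm_sub_rev (x - y)] at h2
    have h3 := norm_nonneg (x - y)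
    constructor <;> linarith
  set F : lieAlg hG → E := fun x => NormedSpace.exp (x : E) with hF
  set K : Set (lieAlg hG) := Subtype.val ⁻¹' s with hK
  have hK0 : K ∈ 𝓝 0 := continuous_subtype_val.continuousAt.preimage_mem_nhds (by simpa using hs)
  have hdK : dimH K = finrank ℝ (lieAlg hG) := Real.dimH_of_mem_nhds hK0
  apply le_antisymm
  · have hFK : dimH (F '' K) ≤ dimH K := by
      refine LipschitzOnWith.dimH_image_le (K := 2) (LipschitzOnWith.of_dist_le_mul ?_)
      intro x hx y hy
      simpa [dist_eq_norm] using (hup x hx y hy).1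
    by_contra! hlt
    obtain ⟨x, hx, ht⟩ := exists_mem_nhdsWithin_lt_dimH_of_lt_dimH hlt
    have hev : ∀ᶠ g in 𝓝 (1 : E), g ∈ G → g ∈ F '' K := by
      filter_upwards [eventually_mem_exp_image hG hs] with g hg hgG
      obtain ⟨y, hy, hys, rfl⟩ := hg hgG
      exact ⟨⟨y, hy⟩, hys, rfl⟩
    have h1 := ht _ (eventually_nhdsWithin_iff.2 (hG.eventually_translate hev hx))
    have h2 : dimH ((fun y => x * y) '' (F '' K)) ≤ dimH (F '' K) :=
      (ContinuousLinearMap.mul ℝ E x).lipschitz.dimH_image_le _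
    exact absurd (h2.trans hFK) (not_le.2 (hdK ▸ h1))
  · have hanti : AntilipschitzWith 2 (fun x : K => F x) := by
      refine AntilipschitzWith.of_le_mul_dist fun x y => ?_
      simpa [Subtype.dist_eq, dist_eq_norm] using (hup x x.2 y y.2).2
    calc (finrank ℝ (lieAlg hG) : ENNReal) = dimH K := hdK.symm
      _ = dimH (Set.univ : Set K) := by
        rw [← (isometry_subtype_coe (s := K)).dimH_image, Set.image_univ, Subtype.range_coe]
      _ ≤ _ := hanti.le_dimH_image _
      _ ≤ dimH G := dimH_mono (by
        rintro _ ⟨x, -, rfl⟩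
        exact exp_mem hG x.1.2)

/-- The translate of `exp '' 𝔤` by `x` is a connected neighbourhood of `x` in `G`. -/
lemma connectedComponent_mem_nhds (hG : IsClosedGroup G) (x : G) :
    connectedComponent x ∈ 𝓝 x := by
  set C : Set E := (fun y => (x : E) * y) '' (NormedSpace.exp '' (lieAlg hG : Set E)) with hC
  have hev : ∀ᶠ g in 𝓝 (1 : E), g ∈ G → g ∈ NormedSpace.exp '' (lieAlg hG : Set E) := by
    filter_upwards [eventually_mem_exp_image hG univ_mem] with g hg hgG
    obtain ⟨y, hy, -, rfl⟩ := hg hgG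
    exact ⟨y, hy, rfl⟩
  have hCpre : IsPreconnected C :=
    ((lieAlg hG).convex.isPreconnected.image _ exp_cont.continuousOn).image _ (by fun_prop)
  have hCG : C ⊆ G := by
    rintro _ ⟨_, ⟨y, hy, rfl⟩, rfl⟩
    exact hG.mul _ x.2 _ (exp_mem hG hy)
  have hxC : (x : E) ∈ C :=
    ⟨1, ⟨0, (lieAlg hG).zero_mem, NormedSpace.exp_zero⟩, mul_one _⟩
  have hpre : IsPreconnected (Subtype.val ⁻¹' C : Set G) := by
    rw [← Topology.IsInducing.subtypeVal.isPreconnected_image, Subtype.image_preimage_coe,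
      Set.inter_eq_right.2 hCG]
    exact hCpre
  refine mem_of_superset ?_ (hpre.subset_connectedComponent hxC)
  filter_upwards [continuous_subtype_val.continuousAt.eventually
    (hG.eventually_translate hev x.2)] with g hg
  exact hg g.2

lemma finite_components (hG : IsClosedGroup G) (hc : IsCompact G) :
    Finite (ConnectedComponents G) := by
  have : CompactSpace G := isCompact_iff_compactSpace.1 hc
  have hloc : IsLocallyConstant (ConnectedComponents.mk : G → ConnectedComponents G) := by
    rw [IsLocallyConstant.iff_eventually_eq]
    intro x
    filter_upwards [connectedComponent_mem_nhds hG x] with y hy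
    exact ConnectedComponents.coe_eq_coe'.2 hy
  have h := hloc.range_finite
  rw [ConnectedComponents.surjective_coe.range_eq] at h
  exact Set.finite_univ_iff.1 h

/-- A closed subgroup with the same Lie algebra is open in `G`. -/
lemma mem_nhdsWithin_of_lieAlg_le {H : Set E} (hG : IsClosedGroup G) (hH : IsClosedGroup H)
    (hHG : H ⊆ G) (hle : lieAlg hG ≤ lieAlg hH) {x : E} (hx : x ∈ H) :
    ∀ᶠ g in 𝓝 x, g ∈ G → g ∈ H := by
  have hev : ∀ᶠ g in 𝓝 (1 : E), g ∈ G → g ∈ H := by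
    filter_upwards [eventually_mem_exp_image hG univ_mem] with g hg hgG
    obtain ⟨y, hy, -, rfl⟩ := hg hgG
    exact exp_mem hH (hle hy)
  filter_upwards [hG.eventually_translate hev (hHG hx)] with g hg hgG
  obtain ⟨h, hh, rfl⟩ := hg hgG
  exact hH.mul _ hx _ hh

end

/-- The components of a clopen subspace are components of the ambient space, so a proper clopen
subspace has fewer of them. -/
lemma card_components_lt {α β : Type*} [TopologicalSpace α] [TopologicalSpace β]
    [Finite (ConnectedComponents β)] {f : α → β} (ho : IsOpenEmbedding f)
    (hcl : IsClosed (Set.range f)) {b : β} (hb : b ∉ Set.range f) :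
    Nat.card (ConnectedComponents α) < Nat.card (ConnectedComponents β) := by
  have hclopen : IsClopen (Set.range f) := ⟨hcl, ho.isOpen_range⟩
  have hsub : ∀ x, connectedComponent (f x) ⊆ Set.range f := fun x =>
    hclopen.connectedComponent_subset ⟨x, rfl⟩
  have hinj : Function.Injective ho.continuous.connectedComponentsMap := by
    intro p q hpq
    obtain ⟨x, rfl⟩ := ConnectedComponents.surjective_coe p
    obtain ⟨y, rfl⟩ := ConnectedComponents.surjective_coe q
    rw [Continuous.connectedComponentsMap_mk, Continuous.connectedComponentsMap_mk,
      ConnectedComponents.coe_eq_coe'] at hpq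
    rw [ConnectedComponents.coe_eq_coe']
    have hpre := isPreconnected_connectedComponent (x := f y) |>.preimage_of_isOpenMap
      ho.injective ho.isOpenMap (hsub y)
    exact hpre.subset_connectedComponent (x := y) mem_connectedComponent hpq
  have hnot : ¬ Function.Surjective ho.continuous.connectedComponentsMap := by
    intro hsurj
    obtain ⟨p, hp⟩ := hsurj (ConnectedComponents.mk b)
    obtain ⟨x, rfl⟩ := ConnectedComponents.surjective_coe p
    rw [Continuous.connectedComponentsMap_mk] at hp
    exact hb (hsub x (ConnectedComponents.coe_eq_coe'.1 hp.symm))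
  have : Finite (ConnectedComponents α) := Finite.of_injective _ hinj
  have := Fintype.ofFinite (ConnectedComponents α)
  have := Fintype.ofFinite (ConnectedComponents β)
  rw [Nat.card_eq_fintype_card, Nat.card_eq_fintype_card]
  exact Fintype.card_lt_of_injective_not_surjective _ hinj hnot

/-- A proper closed subgroup of a compact group is smaller. -/
lemma smaller {E : Type*} [NormedRing E] [NormedAlgebra ℝ E] [FiniteDimensional ℝ E]
    {G H : Set E} (hG : IsClosedGroup G) (hH : IsClosedGroup H) (hc : IsCompact G)
    (hHG : H ⊆ G) {b : E} (hbG : b ∈ G) (hbH : b ∉ H) :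
    dimH H < dimH G ∨ (dimH H = dimH G ∧
      Nat.card (ConnectedComponents H) < Nat.card (ConnectedComponents G)) := by
  have hle : lieAlg hH ≤ lieAlg hG := fun X hX t => hHG (hX t)
  rw [dimH_eq hG, dimH_eq hH]
  rcases hle.lt_or_eq with hlt | heq
  · left
    exact_mod_cast Submodule.finrank_lt_finrank_of_lt hlt
  · right
    refine ⟨by rw [heq], ?_⟩
    have := finite_components hG hc
    have hrange : Set.range (Set.inclusion hHG) = Subtype.val ⁻¹' H := Set.range_inclusion hHG
    have hopen : IsOpen (Subtype.val ⁻¹' H : Set G) := by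
      rw [isOpen_iff_mem_nhds]
      intro x hx
      filter_upwards [continuous_subtype_val.continuousAt.eventually
        (mem_nhdsWithin_of_lieAlg_le hG hH hHG heq.ge hx)] with g hg
      exact hg g.2
    refine card_components_lt (f := Set.inclusion hHG) (b := ⟨b, hbG⟩)
      ⟨Topology.IsEmbedding.inclusion hHG, ?_⟩ ?_ ?_
    · rwa [hrange]
    · rw [hrange]; exact hH.closed.preimage continuous_subtype_val
    · rw [hrange]; exact hbH

end MatrixGroup

/-- For a compact group `G` of orthogonal transformations of `V` with no nonzero fixed
vector, the isotropy group `G_v` of any `v ≠ 0` is strictly smaller: either it has smaller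
dimension, or equal dimension and fewer connected components.  Moreover the corresponding
relation on pairs (dimension, number of components) is well-founded, so there is no
infinite strictly decreasing chain of compact Lie groups. -/
theorem isotropy_group_smaller
    {V : Type*} [NormedAddCommGroup V] [InnerProductSpace ℝ V] [FiniteDimensional ℝ V]
    (G : Set (V →L[ℝ] V)) (hGcompact : IsCompact G)
    (hGone : (ContinuousLinearMap.id ℝ V) ∈ G)
    (hGmul : ∀ A ∈ G, ∀ B ∈ G, A.comp B ∈ G)
    (hGinv : ∀ A ∈ G, ∃ B ∈ G, A.comp B = ContinuousLinearMap.id ℝ V ∧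
      B.comp A = ContinuousLinearMap.id ℝ V)
    (hGiso : ∀ A ∈ G, ∀ v : V, ‖A v‖ = ‖v‖)
    (hfix : ∀ v : V, (∀ A ∈ G, A v = v) → v = 0)
    (v : V) (hv : v ≠ 0) :
    (dimH {A ∈ G | A v = v} < dimH G ∨
      (dimH {A ∈ G | A v = v} = dimH G ∧
        Nat.card (ConnectedComponents {A ∈ G | A v = v}) <
          Nat.card (ConnectedComponents G))) ∧
    WellFounded (fun p q : ℕ × ℕ => p.1 < q.1 ∨ (p.1 = q.1 ∧ p.2 < q.2)) := by
  have hG : MatrixGroup.IsClosedGroup G := ⟨hGcompact.isClosed, hGone, hGmul, hGinv⟩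
  have hcl : IsClosed {A : V →L[ℝ] V | A v = v} :=
    isClosed_eq (ContinuousLinearMap.apply ℝ V v).continuous continuous_const
  have hH : MatrixGroup.IsClosedGroup {A ∈ G | A v = v} := by
    refine ⟨hG.closed.inter hcl, ⟨hGone, rfl⟩, ?_, ?_⟩
    · rintro A ⟨hA, hAv⟩ B ⟨hB, hBv⟩
      refine ⟨hGmul A hA B hB, ?_⟩
      change A (B v) = v
      rw [hBv, hAv]
    · rintro A ⟨hA, hAv⟩
      obtain ⟨B, hB, h1, h2⟩ := hGinv A hA
      refine ⟨B, ⟨hB, ?_⟩, h1, h2⟩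
      have h3 : B (A v) = v := congrArg (fun T : V →L[ℝ] V => T v) h2
      rwa [hAv] at h3
  obtain ⟨b, hbG, hbv⟩ : ∃ b ∈ G, b v ≠ v := by
    by_contra! hcon
    exact hv (hfix v hcon)
  refine ⟨MatrixGroup.smaller hG hH hGcompact (fun A hA => hA.1) hbG (fun h => hbv h.2), ?_⟩
  refine Subrelation.wf ?_ (Prod.lex (α := ℕ) (β := ℕ) inferInstance inferInstance).wf
  rintro p q h
  exact Prod.lex_def.2 h
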